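/- Let D be a digraph on a finite vertex set V in which every vertex has at least one in-neighbor, with γ_t(D) = |V| − 1, and let s ∈ V be a vertex with out-degree 0 in D. Let v ∈ V with v ≠ s, and let D' be the digraph obtained from D by adding the single arc (s, v). Then γ_t(D') = |V| − 1. -/

import Mathlib

/-- A set `S` is a total dominating set of the digraph `D` (given as its arc
relation) if every vertex has an in-neighbor belonging to `S`. -/
def TotalDomSet {V : Type} (D : V → V → Prop) (S : Set V) : Prop :=
  ∀ v : V, ∃ u ∈ S, D u v

/-- The total domination number of a digraph: the least cardinality of a total
dominating set. -/
noncomputable def totalDomNum {V : Type} (D : V → V → Prop) : ℕ :=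
  sInf {n | ∃ S : Set V, TotalDomSet D S ∧ S.ncard = n}

/-- `D` is an orientation of the simple graph `G`: every arc of `D` lies on an
edge of `G`, and every edge of `G` carries exactly one of the two possible arcs. -/
def IsOrientation {V : Type} (G : SimpleGraph V) (D : V → V → Prop) : Prop :=
  (∀ u v : V, D u v → G.Adj u v) ∧ ∀ u v : V, G.Adj u v → (D u v ↔ ¬ D v u)

/-- An orientation (digraph) is valid if every vertex has at least one in-neighbor. -/
def IsValidOrientation {V : Type} (D : V → V → Prop) : Prop :=
  ∀ v : V, ∃ u : V, D u v

/-- The upper orientable total domination number of `G`. -/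
noncomputable def DOMt {V : Type} [Fintype V] (G : SimpleGraph V) : ℕ :=
  sSup {n | ∃ D : V → V → Prop, IsOrientation G D ∧ IsValidOrientation D ∧ totalDomNum D = n}

/-- The lower orientable total domination number of `G`. -/
noncomputable def domt {V : Type} [Fintype V] (G : SimpleGraph V) : ℕ :=
  sInf {n | ∃ D : V → V → Prop, IsOrientation G D ∧ IsValidOrientation D ∧ totalDomNum D = n}

/-! Redirecting `s` to a vertex `u` that dominates at least as much turns every total dominating
set into one that is no larger. After the arc `(s, v)` is added to a digraph in which `s` has
out-degree 0, any old in-neighbor `u` of `v` dominates in the old digraph all that `s` dominates in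
the new one. -/

section

variable {V : Type} {D D' : V → V → Prop}

theorem TotalDomSet.image {S : Set V} (hS : TotalDomSet D S) {f : V → V}
    (hf : ∀ a w, D a w → D' (f a) w) : TotalDomSet D' (f '' S) := fun w =>
  let ⟨a, haS, haw⟩ := hS w
  ⟨f a, Set.mem_image_of_mem f haS, hf a w haw⟩

theorem totalDomSet_univ (hvalid : ∀ v, ∃ u, D u v) : TotalDomSet D Set.univ := fun w =>
  let ⟨u, huw⟩ := hvalid w
  ⟨u, Set.mem_univ u, huw⟩

theorem TotalDomSet.totalDomNum_le_ncard {S : Set V} (hS : TotalDomSet D S) :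
    totalDomNum D ≤ S.ncard :=
  Nat.sInf_le ⟨S, hS, rfl⟩

theorem exists_totalDomSet_ncard_eq_totalDomNum (hvalid : ∀ v, ∃ u, D u v) :
    ∃ S : Set V, TotalDomSet D S ∧ S.ncard = totalDomNum D :=
  Nat.sInf_mem (s := {n | ∃ S : Set V, TotalDomSet D S ∧ S.ncard = n})
    ⟨_, Set.univ, totalDomSet_univ hvalid, rfl⟩

theorem totalDomNum_le_of_forall_imp [Finite V] (hvalid : ∀ v, ∃ u, D u v) {f : V → V}
    (hf : ∀ a w, D a w → D' (f a) w) : totalDomNum D' ≤ totalDomNum D := by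
  obtain ⟨S, hS, hcard⟩ := exists_totalDomSet_ncard_eq_totalDomNum hvalid
  calc
    totalDomNum D' ≤ (f '' S).ncard := (hS.image hf).totalDomNum_le_ncard
    _ ≤ S.ncard := Set.ncard_image_le S.toFinite
    _ = totalDomNum D := hcard

theorem stmt_16_general [Finite V] (hvalid : ∀ v, ∃ u, D u v) {s u v : V} (huv : D u v)
    (hsu : ∀ w, D s w → D u w) :
    totalDomNum (fun a b => D a b ∨ (a = s ∧ b = v)) = totalDomNum D := by
  classical
  have hvalid' : ∀ w, ∃ a, D a w ∨ (a = s ∧ w = v) := fun w => (hvalid w).imp fun _ => Or.inl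
  have redirect : ∀ a w, D a w ∨ (a = s ∧ w = v) → D (Function.update id s u a) w := by
    intro a w haw
    by_cases has : a = s
    · subst has
      rw [Function.update_self]
      rcases haw with haw | ⟨-, rfl⟩
      exacts [hsu w haw, huv]
    · rw [Function.update_of_ne has]
      exact haw.resolve_right fun h => has h.1
  exact le_antisymm (totalDomNum_le_of_forall_imp (f := id) hvalid fun _ _ => Or.inl)
    (totalDomNum_le_of_forall_imp hvalid' redirect)

end

/-- Adding a single out-going arc at a vertex of out-degree 0 does not change a
total domination number equal to `|V| - 1`. -/
theorem stmt_16 {V : Type} [Fintype V] (D : V → V → Prop)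
    (hvalid : ∀ v : V, ∃ u : V, D u v)
    (hγ : totalDomNum D = Fintype.card V - 1)
    (s : V) (hs : ∀ w : V, ¬ D s w)
    (v : V) (hv : v ≠ s) :
    totalDomNum (fun a b : V => D a b ∨ (a = s ∧ b = v)) = Fintype.card V - 1 := by
  obtain ⟨u, huv⟩ := hvalid v
  exact (stmt_16_general hvalid huv fun w hsw => absurd hsw (hs w)).trans hγ
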